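/- For every positive integer n, the number of pairs (x, y) ∈ ℤ² with x² + y² = n and x ≡ y ≡ 1 (mod 2) equals 4 ∑_{d|(n/2)} χ₋₄(d) − 4 ∑_{d|(n/4)} χ₋₄(d). -/

import Mathlib

open Finset

/-- The Kronecker symbol `(-4/d)` for positive `d`. -/
def chiM4 (d : ℕ) : ℤ := if d % 4 = 1 then 1 else if d % 4 = 3 then -1 else 0

/-- `Sdiv χ n k = ∑_{d ∣ n/k} χ d`, interpreted as `0` when `k` does not divide `n`. -/
def Sdiv (χ : ℕ → ℤ) (n k : ℕ) : ℤ := if k ∣ n then ∑ d ∈ (n / k).divisors, χ d else 0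

lemma chiM4_mul (a b : ℕ) : chiM4 (a * b) = chiM4 a * chiM4 b := by
  have ha : a % 4 < 4 := Nat.mod_lt _ (by norm_num)
  have hb : b % 4 < 4 := Nat.mod_lt _ (by norm_num)
  unfold chiM4
  rw [Nat.mul_mod]
  interval_cases a % 4 <;> interval_cases b % 4 <;> norm_num

lemma chiM4_of_even {d : ℕ} (hd : 2 ∣ d) : chiM4 d = 0 := by
  unfold chiM4
  rw [if_neg (by omega), if_neg (by omega)]

/-- The divisor sum of `chiM4` satisfies the two-term Hecke recurrence at every prime. -/
lemma sum_divisors_chiM4_prime_mul {p n : ℕ} (hp : p.Prime) (hn : 0 < n) :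
    ∑ d ∈ (p * n).divisors, chiM4 d =
      (1 + chiM4 p) * ∑ d ∈ n.divisors, chiM4 d -
        chiM4 p * (if p ∣ n then ∑ d ∈ (n / p).divisors, chiM4 d else 0) := by
  have hinj : Function.Injective (p * ·) := fun a b h => Nat.eq_of_mul_eq_mul_left hp.pos h
  have hunion : (p * n).divisors = n.divisors ∪ n.divisors.image (p * ·) := by
    ext d
    simp only [Nat.mem_divisors, mem_union, mem_image]
    constructor
    · rintro ⟨hd, -⟩
      by_cases hpd : p ∣ d
      · obtain ⟨e, rfl⟩ := hpd
        exact Or.inr ⟨e, ⟨Nat.dvd_of_mul_dvd_mul_left hp.pos hd, hn.ne'⟩, rfl⟩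
      · exact Or.inl ⟨((Nat.Prime.coprime_iff_not_dvd hp).2 hpd).symm.dvd_of_dvd_mul_left hd, hn.ne'⟩
    · rintro (⟨hd, -⟩ | ⟨e, ⟨he, -⟩, rfl⟩)
      · exact ⟨hd.mul_left p, (Nat.mul_pos hp.pos hn).ne'⟩
      · exact ⟨Nat.mul_dvd_mul_left p he, (Nat.mul_pos hp.pos hn).ne'⟩
  have himage (m : ℕ) : ∑ d ∈ m.divisors.image (p * ·), chiM4 d =
      chiM4 p * ∑ d ∈ m.divisors, chiM4 d := by
    rw [sum_image hinj.injOn, mul_sum]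
    exact sum_congr rfl fun d _ => chiM4_mul p d
  have hinter : ∑ d ∈ n.divisors ∩ n.divisors.image (p * ·), chiM4 d =
      chiM4 p * (if p ∣ n then ∑ d ∈ (n / p).divisors, chiM4 d else 0) := by
    split_ifs with hpn
    · obtain ⟨m, rfl⟩ := hpn
      rw [Nat.mul_div_cancel_left m hp.pos, ← himage]
      congr 1
      ext d
      simp only [Nat.mem_divisors, mem_inter, mem_image]
      constructor
      · rintro ⟨⟨hd, -⟩, e, -, rfl⟩
        exact ⟨e, ⟨Nat.dvd_of_mul_dvd_mul_left hp.pos hd, by rintro rfl; simp at hn⟩, rfl⟩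
      · rintro ⟨e, ⟨he, -⟩, rfl⟩
        exact ⟨⟨Nat.mul_dvd_mul_left p he, hn.ne'⟩, e, ⟨he.mul_left p, hn.ne'⟩, rfl⟩
    · rw [mul_zero]
      refine sum_eq_zero fun d hd => ?_
      simp only [Nat.mem_divisors, mem_inter, mem_image] at hd
      obtain ⟨⟨hd, -⟩, e, -, rfl⟩ := hd
      exact absurd ((dvd_mul_right p e).trans hd) hpn
  have := sum_union_inter (s₁ := n.divisors) (s₂ := n.divisors.image (p * ·)) (f := chiM4)
  rw [← hunion, himage, hinter] at this
  linarith

/-- The Gaussian integers of norm `n`. -/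
def gaussianNormEq (n : ℕ) : Set GaussianInt := {z | z.norm = n}

lemma gaussianInt_norm_eq (z : GaussianInt) : z.norm = z.re ^ 2 + z.im ^ 2 := by
  rw [Zsqrtd.norm_def]; ring

lemma finite_gaussianNormEq (n : ℕ) : (gaussianNormEq n).Finite := by
  refine ((Set.finite_Icc (-(n : ℤ)) n).prod (Set.finite_Icc (-(n : ℤ)) n)).preimage
    (f := fun z : GaussianInt => (z.re, z.im)) ?_ |>.subset ?_
  · intro z _ w _ h
    exact Zsqrtd.ext (congrArg Prod.fst h) (congrArg Prod.snd h)
  · intro z hz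
    have h : z.re ^ 2 + z.im ^ 2 = n := (gaussianInt_norm_eq z).symm.trans hz
    simp only [Set.mem_preimage, Set.mem_prod, Set.mem_Icc]
    refine ⟨⟨?_, ?_⟩, ?_, ?_⟩ <;> nlinarith [sq_nonneg z.re, sq_nonneg z.im]

lemma ncard_gaussianNormEq_dvd {w : GaussianInt} {k : ℕ} (hk : 0 < k) (hw : w.norm = k) (n : ℕ) :
    {z ∈ gaussianNormEq (k * n) | w ∣ z}.ncard = (gaussianNormEq n).ncard := by
  have hw0 : w ≠ 0 := by
    rintro rfl
    rw [Zsqrtd.norm_zero] at hw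
    omega
  rw [← Set.ncard_image_of_injective (gaussianNormEq n) (mul_right_injective₀ hw0)]
  congr 1
  ext z
  simp only [gaussianNormEq, Set.mem_ofPred_eq, Set.mem_image]
  have key (u : GaussianInt) : (w * u).norm = (k * n : ℕ) ↔ u.norm = n := by
    rw [Zsqrtd.norm_mul, hw, Nat.cast_mul]
    exact mul_right_inj' (by exact_mod_cast hk.ne')
  constructor
  · rintro ⟨hz, u, rfl⟩
    exact ⟨u, (key u).1 hz, rfl⟩
  · rintro ⟨u, hu, rfl⟩
    exact ⟨(key u).2 hu, dvd_mul_right w u⟩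

lemma ncard_gaussianNormEq_two_mul (n : ℕ) :
    (gaussianNormEq (2 * n)).ncard = (gaussianNormEq n).ncard := by
  rw [← ncard_gaussianNormEq_dvd (w := ⟨1, 1⟩) two_pos (by simp [Zsqrtd.norm_def]) n]
  congr 1
  ext z
  refine ⟨fun hz => ⟨hz, ?_⟩, And.left⟩
  have h : z.re ^ 2 + z.im ^ 2 = (2 * n : ℕ) := (gaussianInt_norm_eq z).symm.trans hz
  have heven : Even (z.re + z.im) := by
    have : Even (z.re ^ 2 + z.im ^ 2) := ⟨n, by rw [h]; push_cast; ring⟩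
    simpa [Int.even_add, Int.even_pow] using this
  obtain ⟨t, ht⟩ := heven
  refine ⟨⟨t, t - z.re⟩, Zsqrtd.ext ?_ ?_⟩
  · simp
  · simp
    linarith

lemma mul_star_of_mem_gaussianNormEq {n : ℕ} {z : GaussianInt} (hz : z ∈ gaussianNormEq n) :
    z * star z = n := by
  rw [← Zsqrtd.norm_eq_mul_conj, show z.norm = n from hz, Int.cast_natCast]

lemma star_dvd_of_dvd_star {w z : GaussianInt} (h : w ∣ star z) : star w ∣ z := by
  obtain ⟨u, hu⟩ := h
  exact ⟨star u, by rw [← star_star z, hu, star_mul']⟩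

lemma ncard_gaussianNormEq_prime_dvd {p : ℕ} (hp : p.Prime) (n : ℕ) :
    {z ∈ gaussianNormEq (p * n) | (p : GaussianInt) ∣ z}.ncard =
      if p ∣ n then (gaussianNormEq (n / p)).ncard else 0 := by
  have hnorm : (p : GaussianInt).norm = (p * p : ℕ) := by
    rw [Zsqrtd.norm_natCast, Nat.cast_mul]
  split_ifs with hpn
  · obtain ⟨m, rfl⟩ := hpn
    rw [Nat.mul_div_cancel_left m hp.pos,
      ← ncard_gaussianNormEq_dvd (Nat.mul_pos hp.pos hp.pos) hnorm m, mul_assoc]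
  · rw [Set.ncard_eq_zero ((finite_gaussianNormEq _).subset fun _ h => h.1),
      Set.eq_empty_iff_forall_notMem]
    rintro z ⟨hz, u, rfl⟩
    have h : ((p : GaussianInt) * u).norm = (p * n : ℕ) := hz
    rw [Zsqrtd.norm_mul, hnorm, Nat.cast_mul, Nat.cast_mul, mul_assoc] at h
    have hcancel := mul_left_cancel₀ (by exact_mod_cast hp.ne_zero) h
    exact hpn (Int.natCast_dvd_natCast.1 ⟨_, hcancel.symm⟩)

/-- Recurrence at an inert prime. -/
lemma ncard_gaussianNormEq_inert_mul {p : ℕ} (hp : p.Prime) (hp3 : p % 4 = 3) (n : ℕ) :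
    (gaussianNormEq (p * n)).ncard = if p ∣ n then (gaussianNormEq (n / p)).ncard else 0 := by
  have := Fact.mk hp
  have hprime := GaussianInt.prime_of_nat_prime_of_mod_four_eq_three p hp3
  have hdvd : ∀ z ∈ gaussianNormEq (p * n), (p : GaussianInt) ∣ z := by
    intro z hz
    have : (p : GaussianInt) ∣ z * star z := by
      rw [mul_star_of_mem_gaussianNormEq hz, Nat.cast_mul]
      exact dvd_mul_right _ _
    refine (hprime.dvd_or_dvd this).elim id fun h => ?_
    simpa using star_dvd_of_dvd_star h
  rw [← ncard_gaussianNormEq_prime_dvd hp]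
  congr 1
  ext z
  exact ⟨fun hz => ⟨hz, hdvd z hz⟩, And.left⟩

/-- Recurrence at a split prime. -/
lemma ncard_gaussianNormEq_split_mul {p : ℕ} (hp : p.Prime) (hp1 : p % 4 = 1) (n : ℕ) :
    (gaussianNormEq (p * n)).ncard + (if p ∣ n then (gaussianNormEq (n / p)).ncard else 0) =
      2 * (gaussianNormEq n).ncard := by
  have := Fact.mk hp
  obtain ⟨a, b, hab⟩ := Nat.Prime.sq_add_sq (p := p) (by omega)
  set w : GaussianInt := ⟨a, b⟩ with hwdef
  have hw : w.norm = p := by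
    rw [gaussianInt_norm_eq, ← hab]; simp [hwdef]
  have hws : (star w).norm = p := by rw [Zsqrtd.norm_conj, hw]
  have hwp : w * star w = p := mul_star_of_mem_gaussianNormEq hw
  have hprime_of_norm {v : GaussianInt} (hv : v.norm = p) : Prime v := by
    refine Irreducible.prime ⟨fun h => ?_, fun x y hxy => ?_⟩
    · rw [← Zsqrtd.norm_eq_one_iff, hv, Int.natAbs_natCast] at h
      exact hp.one_lt.ne' h
    · rw [← Zsqrtd.norm_eq_one_iff, ← Zsqrtd.norm_eq_one_iff]
      have h : x.norm.natAbs * y.norm.natAbs = p := by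
        rw [← Int.natAbs_mul, ← Zsqrtd.norm_mul, ← hxy, hv, Int.natAbs_natCast]
      rcases (Nat.dvd_prime hp).1 ⟨_, h.symm⟩ with h1 | h1
      · exact Or.inl h1
      · rw [h1] at h
        exact Or.inr (Nat.eq_of_mul_eq_mul_left hp.pos (by rw [h, mul_one]))
  have hnot : ¬ star w ∣ w := by
    intro h
    have hsum : star w ∣ ((2 * a : ℤ) : GaussianInt) := by
      have : ((2 * a : ℤ) : GaussianInt) = w + star w := by
        ext
        · simp [hwdef]
          ring
        · simp [hwdef]
      rw [this]
      exact dvd_add h dvd_rfl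
    obtain ⟨u, hu⟩ := hsum
    have h4 : (2 * a : ℤ) * (2 * a) = p * u.norm := by
      rw [← hws, ← Zsqrtd.norm_mul, ← hu, Zsqrtd.norm_intCast]
    have hpa : p ∣ (2 * a) * (2 * a) := Int.natCast_dvd_natCast.1 ⟨_, by exact_mod_cast h4⟩
    have hpa' : p ∣ 2 * a := (hp.dvd_mul.1 hpa).elim id id
    rcases hp.dvd_mul.1 hpa' with h2 | h2
    · have := (Nat.prime_dvd_prime_iff_eq hp Nat.prime_two).1 h2
      omega
    · obtain ⟨c, rfl⟩ := h2
      rcases Nat.eq_zero_or_pos c with rfl | hc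
      · have : b ∣ p := ⟨b, by rw [← hab]; ring⟩
        rcases (Nat.dvd_prime hp).1 this with h1 | h1
        · rw [h1] at hab
          exact hp.one_lt.ne (by simpa using hab)
        · rw [h1] at hab
          nlinarith [hp.one_lt]
      · have : p * 1 ≤ p * c := Nat.mul_le_mul_left p hc
        nlinarith [hp.one_lt, sq_nonneg b]
  have hboth (z : GaussianInt) : w ∣ z ∧ star w ∣ z ↔ (p : GaussianInt) ∣ z := by
    rw [← hwp]
    constructor
    · rintro ⟨⟨u, rfl⟩, h⟩
      exact mul_dvd_mul_left w (((hprime_of_norm hws).dvd_or_dvd h).resolve_left hnot)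
    · exact fun h => ⟨(dvd_mul_right _ _).trans h, (dvd_mul_left _ _).trans h⟩
  have hunion : gaussianNormEq (p * n) =
      {z ∈ gaussianNormEq (p * n) | w ∣ z} ∪ {z ∈ gaussianNormEq (p * n) | star w ∣ z} := by
    ext z
    refine ⟨fun hz => ?_, fun hz => hz.elim And.left And.left⟩
    have : w ∣ z * star z := by
      rw [mul_star_of_mem_gaussianNormEq hz, Nat.cast_mul, ← hwp, mul_assoc]
      exact dvd_mul_right _ _
    exact ((hprime_of_norm hw).dvd_or_dvd this).imp (⟨hz, ·⟩)
      fun h => ⟨hz, star_dvd_of_dvd_star h⟩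
  have hinter : {z ∈ gaussianNormEq (p * n) | w ∣ z} ∩ {z ∈ gaussianNormEq (p * n) | star w ∣ z} =
      {z ∈ gaussianNormEq (p * n) | (p : GaussianInt) ∣ z} := by
    ext z
    simp only [Set.mem_inter_iff, Set.mem_ofPred_eq, ← hboth]
    tauto
  have hcard := Set.ncard_union_add_ncard_inter
    {z ∈ gaussianNormEq (p * n) | w ∣ z} {z ∈ gaussianNormEq (p * n) | star w ∣ z}
    ((finite_gaussianNormEq _).subset fun _ h => h.1)
    ((finite_gaussianNormEq _).subset fun _ h => h.1)
  rw [← hunion, hinter, ncard_gaussianNormEq_dvd hp.pos hw,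
    ncard_gaussianNormEq_dvd hp.pos hws, ← two_mul] at hcard
  rw [← hcard, ncard_gaussianNormEq_prime_dvd hp]

lemma ncard_gaussianNormEq_prime_mul {p : ℕ} (hp : p.Prime) (n : ℕ) :
    ((gaussianNormEq (p * n)).ncard : ℤ) = (1 + chiM4 p) * (gaussianNormEq n).ncard -
      chiM4 p * (if p ∣ n then ((gaussianNormEq (n / p)).ncard : ℤ) else 0) := by
  rcases hp.eq_two_or_odd with rfl | hodd
  · rw [ncard_gaussianNormEq_two_mul, chiM4_of_even dvd_rfl]
    ring
  · rcases (by omega : p % 4 = 1 ∨ p % 4 = 3) with h | h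
    · have hchi : chiM4 p = 1 := by simp [chiM4, h]
      have := ncard_gaussianNormEq_split_mul hp h n
      rw [hchi]
      rw [← Nat.cast_inj (R := ℤ)] at this
      push_cast at this
      linarith
    · have hchi : chiM4 p = -1 := by simp [chiM4, h]
      rw [hchi, ncard_gaussianNormEq_inert_mul hp h n]
      push_cast
      ring

lemma ncard_gaussianNormEq_one : (gaussianNormEq 1).ncard = 4 := by
  have : gaussianNormEq 1 = (({⟨1, 0⟩, ⟨-1, 0⟩, ⟨0, 1⟩, ⟨0, -1⟩} : Finset GaussianInt) :
      Set GaussianInt) := by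
    ext z
    simp only [gaussianNormEq, Set.mem_ofPred_eq, gaussianInt_norm_eq, Finset.coe_insert,
      Finset.coe_singleton, Set.mem_insert_iff, Set.mem_singleton_iff, Zsqrtd.ext_iff,
      Nat.cast_one]
    constructor
    · intro h
      have h1 : z.re ≤ 1 := by nlinarith [sq_nonneg z.im]
      have h2 : -1 ≤ z.re := by nlinarith [sq_nonneg z.im]
      have h3 : z.im ≤ 1 := by nlinarith [sq_nonneg z.re]
      have h4 : -1 ≤ z.im := by nlinarith [sq_nonneg z.re]
      generalize z.re = x at *
      generalize z.im = y at *
      interval_cases x <;> interval_cases y <;> simp_all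
    · rintro (⟨hre, him⟩ | ⟨hre, him⟩ | ⟨hre, him⟩ | ⟨hre, him⟩) <;> rw [hre, him] <;> norm_num
  rw [this, Set.ncard_coe_finset]
  decide

/-- **Jacobi's two-square theorem.** -/
lemma ncard_gaussianNormEq_eq (n : ℕ) (hn : 0 < n) :
    ((gaussianNormEq n).ncard : ℤ) = 4 * ∑ d ∈ n.divisors, chiM4 d := by
  induction n using Nat.strong_induction_on with
  | _ n ih =>
    rcases eq_or_ne n 1 with rfl | hn1
    · rw [ncard_gaussianNormEq_one]
      simp [chiM4]
    · have hp := Nat.minFac_prime hn1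
      obtain ⟨m, hm⟩ := Nat.minFac_dvd n
      generalize n.minFac = p at hp hm
      subst hm
      have hm0 : 0 < m := Nat.pos_of_mul_pos_left hn
      have hlt : m < p * m := by nlinarith [hp.one_lt]
      rw [ncard_gaussianNormEq_prime_mul hp, sum_divisors_chiM4_prime_mul hp hm0, ih m hlt hm0]
      split_ifs with hpm
      · rw [ih (m / p) ((Nat.div_le_self m p).trans_lt hlt)
          (Nat.div_pos (Nat.le_of_dvd hm0 hpm) hp.pos)]
        ring
      · ring

lemma sum_divisors_chiM4_two_mul {m : ℕ} (hm : 0 < m) :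
    ∑ d ∈ (2 * m).divisors, chiM4 d = ∑ d ∈ m.divisors, chiM4 d := by
  rw [sum_divisors_chiM4_prime_mul Nat.prime_two hm, chiM4_of_even dvd_rfl]
  ring

lemma sq_emod_four_of_odd {x : ℤ} (hx : x % 2 = 1) : x ^ 2 % 4 = 1 :=
  Int.sq_mod_four_eq_one_of_odd (Int.odd_iff.2 hx)

theorem rep_x2_y2_x1mod2_y1mod2 (n : ℕ) (hn : 0 < n) :
    ({p : ℤ × ℤ | p.1 ^ 2 + p.2 ^ 2 = (n : ℤ) ∧ p.1 % 2 = 1 ∧ p.2 % 2 = 1}.ncard : ℤ) =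
      4 * Sdiv chiM4 n 2 - 4 * Sdiv chiM4 n 4 := by
  by_cases hn2 : n % 4 = 2
  · obtain ⟨m, rfl⟩ : 2 ∣ n := by omega
    have hm : 0 < m := by omega
    have hset : {p : ℤ × ℤ | p.1 ^ 2 + p.2 ^ 2 = ((2 * m : ℕ) : ℤ) ∧ p.1 % 2 = 1 ∧ p.2 % 2 = 1} =
        (fun z : GaussianInt => (z.re, z.im)) '' gaussianNormEq (2 * m) := by
      ext ⟨x, y⟩
      simp only [Set.mem_ofPred_eq, Set.mem_image, gaussianNormEq, gaussianInt_norm_eq]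
      constructor
      · rintro ⟨h, -, -⟩
        exact ⟨⟨x, y⟩, h, rfl⟩
      · rintro ⟨z, h, hz⟩
        obtain ⟨rfl, rfl⟩ := Prod.ext_iff.1 hz
        refine ⟨h, ?_⟩
        have heven {u : ℤ} (hu : u % 2 = 0) : u ^ 2 % 4 = 0 := by
          obtain ⟨k, rfl⟩ := Int.dvd_of_emod_eq_zero hu
          rw [mul_pow]
          omega
        rcases Int.emod_two_eq_zero_or_one z.re with hx | hx <;>
          rcases Int.emod_two_eq_zero_or_one z.im with hy | hy
        · have := heven hx; have := heven hy; omega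
        · have := heven hx; have := sq_emod_four_of_odd hy; omega
        · have := sq_emod_four_of_odd hx; have := heven hy; omega
        · exact ⟨hx, hy⟩
    rw [hset, Set.ncard_image_of_injective _ fun z w h =>
      Zsqrtd.ext (congrArg Prod.fst h) (congrArg Prod.snd h), ncard_gaussianNormEq_eq _ hn,
      sum_divisors_chiM4_two_mul hm, Sdiv, if_pos (dvd_mul_right 2 m),
      Nat.mul_div_cancel_left m two_pos, Sdiv, if_neg (by omega)]
    ring
  · have hempty : {p : ℤ × ℤ | p.1 ^ 2 + p.2 ^ 2 = (n : ℤ) ∧ p.1 % 2 = 1 ∧ p.2 % 2 = 1} = ∅ := by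
      refine Set.eq_empty_iff_forall_notMem.2 ?_
      rintro ⟨x, y⟩ ⟨h, hx, hy⟩
      have := sq_emod_four_of_odd hx
      have := sq_emod_four_of_odd hy
      simp only at *
      omega
    rw [hempty, Set.ncard_empty, Nat.cast_zero]
    by_cases h4 : 4 ∣ n
    · obtain ⟨k, rfl⟩ := h4
      have hk : 0 < k := by omega
      rw [Sdiv, if_pos (by omega), Sdiv, if_pos (by omega), Nat.mul_div_cancel_left k four_pos,
        show 4 * k / 2 = 2 * k by omega, sum_divisors_chiM4_two_mul hk]
      ring
    · rw [Sdiv, if_neg (by omega), Sdiv, if_neg h4]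
      ring
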